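/- (Soundness of the embedding) For any subexponential signature Σ = (I, ⪯, f) with f(i) ⊆ {C, W, E, A1, A2} (associativity allowed): if an acLL sequent Γ ⊢ A is provable in acLL, then ⊢ (Γ̂⊥, Â) is provable in CacLL over the same signature. -/

import Mathlib

set_option autoImplicit false

namespace NACLL

/-- Structures: binary trees whose leaves are formulas, with an empty structure.
`(∅,Γ)` and `(Γ,∅)` are identified with `Γ` via the smart constructor `comma`. -/
inductive Struct (F : Type) : Type where
  | emp : Struct F
  | leaf : F → Struct F
  | pair : Struct F → Struct F → Struct F

namespace Struct

/-- Pairing of structures, erasing empty substructures. -/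
def comma {F : Type} : Struct F → Struct F → Struct F
  | .emp, Δ => Δ
  | Γ, .emp => Γ
  | Γ, Δ => .pair Γ Δ

def map {F G : Type} (f : F → G) : Struct F → Struct G
  | .emp => .emp
  | .leaf a => .leaf (f a)
  | .pair l r => .pair (map f l) (map f r)

/-- Number of formula leaves of a structure. -/
def nleaves {F : Type} : Struct F → ℕ
  | .emp => 0
  | .leaf _ => 1
  | .pair l r => nleaves l + nleaves r

/-- All formula leaves of a structure satisfy a predicate. -/
def Forall {F : Type} (p : F → Prop) : Struct F → Prop
  | .emp => True
  | .leaf a => p a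
  | .pair l r => Forall p l ∧ Forall p r

end Struct

/-- Structural equivalence: the reflexive, symmetric, transitive closure of
top-level exchange and top-level associativity. -/
inductive StEquiv {F : Type} : Struct F → Struct F → Prop where
  | refl (Γ : Struct F) : StEquiv Γ Γ
  | symm {Γ Δ : Struct F} : StEquiv Γ Δ → StEquiv Δ Γ
  | trans {Γ Δ Θ : Struct F} : StEquiv Γ Δ → StEquiv Δ Θ → StEquiv Γ Θ
  | exch (Γ Δ : Struct F) : StEquiv (Γ.comma Δ) (Δ.comma Γ)
  | assoc (Γ Δ Θ : Struct F) : StEquiv (Γ.comma (Δ.comma Θ)) ((Γ.comma Δ).comma Θ)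

/-- Contexts with one hole. -/
inductive Ctx (F : Type) : Type where
  | hole : Ctx F
  | pairL : Ctx F → Struct F → Ctx F
  | pairR : Struct F → Ctx F → Ctx F

namespace Ctx

/-- Filling the hole of a context with a structure (empty substructures are erased). -/
def fill {F : Type} : Ctx F → Struct F → Struct F
  | .hole, Ξ => Ξ
  | .pairL R Δ, Ξ => (fill R Ξ).comma Δ
  | .pairR Γ R, Ξ => Γ.comma (fill R Ξ)

/-- A context viewed as a structure over `Option F`, the hole being the leaf `none`. -/
def toStruct {F : Type} : Ctx F → Struct (Option F)
  | .hole => .leaf none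
  | .pairL R Δ => (toStruct R).comma (Δ.map some)
  | .pairR Γ R => (Γ.map some).comma (toStruct R)

def size {F : Type} : Ctx F → ℕ
  | .hole => 0
  | .pairL R _ => size R + 2
  | .pairR _ R => size R + 1

/-- The designator. -/
def desi {F : Type} : Ctx F → Struct F
  | .hole => .emp
  | .pairL R Δ => desi (.pairR Δ R)
  | .pairR Γ .hole => Γ
  | .pairR Γ (.pairR Δ P) => desi (.pairR (Γ.comma Δ) P)
  | .pairR Γ (.pairL D Θp) => desi (.pairR (Θp.comma Γ) D)
termination_by c => size c
decreasing_by all_goals simp [size]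

/-- All formula leaves of a context (other than the hole) satisfy a predicate. -/
def Forall {F : Type} (p : F → Prop) : Ctx F → Prop
  | .hole => True
  | .pairL R Δ => Forall p R ∧ Δ.Forall p
  | .pairR Γ R => Γ.Forall p ∧ Forall p R

end Ctx

/-- Structural equivalence of one-hole contexts, treating the hole as a leaf. -/
def CtxEquiv {F : Type} (T X : Ctx F) : Prop := StEquiv T.toStruct X.toStruct

/-- Contexts with two holes (the first hole is the designated one). -/
inductive Ctx2 (F : Type) : Type where
  | splitLR : Ctx F → Ctx F → Ctx2 F
  | splitRL : Ctx F → Ctx F → Ctx2 F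
  | pairL : Ctx2 F → Struct F → Ctx2 F
  | pairR : Struct F → Ctx2 F → Ctx2 F

namespace Ctx2

/-- Filling the first hole of a two-hole context, yielding a one-hole context. -/
def fillFst {F : Type} : Ctx2 F → Struct F → Ctx F
  | .splitLR c1 c2, Δ => .pairR (c1.fill Δ) c2
  | .splitRL c2 c1, Δ => .pairL c2 (c1.fill Δ)
  | .pairL R Γ, Δ => .pairL (fillFst R Δ) Γ
  | .pairR Γ R, Δ => .pairR Γ (fillFst R Δ)

end Ctx2

end NACLL
namespace NACLL

/-- Structural axioms that a subexponential may license. -/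
inductive SubAx : Type where
  | C : SubAx
  | W : SubAx
  | E : SubAx
  | A1 : SubAx
  | A2 : SubAx
deriving DecidableEq

/-- A subexponential signature: a preordered set of indices together with an
upwardly closed assignment of licensed structural axioms. -/
structure Sig (I : Type) where
  le : I → I → Prop
  le_refl : ∀ i, le i i
  le_trans : ∀ {i j k}, le i j → le j k → le i k
  f : I → Set SubAx
  upclosed : ∀ {i j}, le i j → f i ⊆ f j

/-- Formulas of classical non-associative non-commutative multimodal linear logic. -/
inductive CForm (I : Type) : Type where
  | pos : ℕ → CForm I
  | neg : ℕ → CForm I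
  | tensor : CForm I → CForm I → CForm I
  | par : CForm I → CForm I → CForm I
  | one : CForm I
  | bot : CForm I
  | oplus : CForm I → CForm I → CForm I
  | with' : CForm I → CForm I → CForm I
  | zero : CForm I
  | top : CForm I
  | bang : I → CForm I → CForm I
  | quest : I → CForm I → CForm I

namespace CForm

/-- De Morgan dual, pushed to atomic scope (order-reversing on the multiplicatives). -/
def dual {I : Type} : CForm I → CForm I
  | .pos a => .neg a
  | .neg a => .pos a
  | .tensor A B => .par (dual B) (dual A)
  | .par A B => .tensor (dual B) (dual A)
  | .one => .bot
  | .bot => .one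
  | .oplus A B => .with' (dual A) (dual B)
  | .with' A B => .oplus (dual A) (dual B)
  | .zero => .top
  | .top => .zero
  | .bang i A => .quest i (dual A)
  | .quest i A => .bang i (dual A)

/-- The counter ♮ on formulas. -/
def counter {I : Type} : CForm I → ℤ
  | .pos _ => 0
  | .neg _ => 1
  | .tensor A B => counter A + counter B
  | .par A B => counter A + counter B - 1
  | .one => 0
  | .bot => 1
  | .oplus A _ => counter A
  | .with' A _ => counter A
  | .zero => 1
  | .top => 0
  | .bang _ A => counter A
  | .quest _ A => counter A

end CForm

/-- The counter ♮ extended to structures. -/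
def Struct.counter {I : Type} : Struct (CForm I) → ℤ
  | .emp => 0
  | .leaf A => A.counter
  | .pair l r => counter l + counter r

/-- All leaves of a (nonempty) structure are `?ᵏ`-formulas whose label licenses
the given structural axiom. -/
inductive QAll {I : Type} (σ : Sig I) (ax : SubAx) : Struct (CForm I) → Prop where
  | leaf {k : I} {F : CForm I} (h : ax ∈ σ.f k) : QAll σ ax (.leaf (.quest k F))
  | pair {Γ Δ : Struct (CForm I)} : QAll σ ax Γ → QAll σ ax Δ → QAll σ ax (.pair Γ Δ)

/-- `UpSet σ i Γ Γ'` holds iff `Γ^{↑i}` is defined and equal to `Γ'`: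
every leaf of `Γ` is a `?ᵏ`-formula which is kept when `i ⪯ k` and erased when
`i ⋠ k` and `W ∈ f(k)`. -/
inductive UpSet {I : Type} (σ : Sig I) (i : I) : Struct (CForm I) → Struct (CForm I) → Prop where
  | emp : UpSet σ i .emp .emp
  | keep {k : I} {F : CForm I} (h : σ.le i k) :
      UpSet σ i (.leaf (.quest k F)) (.leaf (.quest k F))
  | drop {k : I} {F : CForm I} (h1 : ¬ σ.le i k) (h2 : SubAx.W ∈ σ.f k) :
      UpSet σ i (.leaf (.quest k F)) .emp
  | pair {Γ Γ' Δ Δ' : Struct (CForm I)} :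
      UpSet σ i Γ Γ' → UpSet σ i Δ Δ' → UpSet σ i (.pair Γ Δ) (Γ'.comma Δ')

/-- Structures over `Option F` serve as multi-hole contexts: `none`-leaves are
holes. `fillAll T D` fills every hole with `D` (erasing empty substructures). -/
def fillAll {F : Type} : Struct (Option F) → Struct F → Struct F
  | .emp, _ => .emp
  | .leaf (some a), _ => .leaf a
  | .leaf none, D => D
  | .pair l r, D => (fillAll l D).comma (fillAll r D)

/-- Derivability in the one-sided classical sequent calculus CacLL over the
signature `σ`.  The Boolean flag indicates whether the cut rule may be used:
`CDer σ false` is cut-free CacLL, `CDer σ true` is CacLL extended with cut. -/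
inductive CDer {I : Type} (σ : Sig I) : Bool → Struct (CForm I) → Prop where
  | initP {b : Bool} (a : ℕ) :
      CDer σ b (.pair (.leaf (.pos a)) (.leaf (.neg a)))
  | initN {b : Bool} (a : ℕ) :
      CDer σ b (.pair (.leaf (.neg a)) (.leaf (.pos a)))
  | tensor {b : Bool} {Γ Δ : Struct (CForm I)} {F G : CForm I} :
      CDer σ b (Γ.comma (.leaf G)) → CDer σ b (Δ.comma (.leaf F)) →
      CDer σ b ((Γ.comma Δ).comma (.leaf (.tensor F G)))
  | par {b : Bool} (R : Ctx (CForm I)) {F G : CForm I} :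
      CDer σ b (R.fill (.pair (.leaf F) (.leaf G))) →
      CDer σ b (R.fill (.leaf (.par F G)))
  | oplus₁ {b : Bool} (R : Ctx (CForm I)) {F1 F2 : CForm I} :
      CDer σ b (R.fill (.leaf F1)) → CDer σ b (R.fill (.leaf (.oplus F1 F2)))
  | oplus₂ {b : Bool} (R : Ctx (CForm I)) {F1 F2 : CForm I} :
      CDer σ b (R.fill (.leaf F2)) → CDer σ b (R.fill (.leaf (.oplus F1 F2)))
  | with' {b : Bool} (R : Ctx (CForm I)) {F1 F2 : CForm I} :
      CDer σ b (R.fill (.leaf F1)) → CDer σ b (R.fill (.leaf F2)) →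
      CDer σ b (R.fill (.leaf (.with' F1 F2)))
  | bot {b : Bool} (R : Ctx (CForm I)) :
      CDer σ b (R.fill .emp) → CDer σ b (R.fill (.leaf .bot))
  | one {b : Bool} : CDer σ b (.leaf .one)
  | top {b : Bool} (R : Ctx (CForm I)) : CDer σ b (R.fill (.leaf .top))
  | exch {b : Bool} {Γ Δ : Struct (CForm I)} :
      CDer σ b (Δ.comma Γ) → CDer σ b (Γ.comma Δ)
  | assoc₁ {b : Bool} {Γ Δ Θ : Struct (CForm I)} :
      CDer σ b (Γ.comma (Δ.comma Θ)) → CDer σ b ((Γ.comma Δ).comma Θ)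
  | assoc₂ {b : Bool} {Γ Δ Θ : Struct (CForm I)} :
      CDer σ b ((Γ.comma Δ).comma Θ) → CDer σ b (Γ.comma (Δ.comma Θ))
  | prom {b : Bool} {Γ Γ' : Struct (CForm I)} {i : I} {F : CForm I} :
      UpSet σ i Γ Γ' → CDer σ b (Γ'.comma (.leaf F)) →
      CDer σ b (Γ.comma (.leaf (.bang i F)))
  | der {b : Bool} (R : Ctx (CForm I)) {i : I} {F : CForm I} :
      CDer σ b (R.fill (.leaf F)) → CDer σ b (R.fill (.leaf (.quest i F)))
  | qA1 {b : Bool} {Δ1 Δ2 Δ3 Γ : Struct (CForm I)} (h : QAll σ .A1 Γ) :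
      CDer σ b (((Δ1.comma Δ2).comma Δ3).comma Γ) →
      CDer σ b ((Δ1.comma (Δ2.comma Δ3)).comma Γ)
  | qA2 {b : Bool} {Δ1 Δ2 Δ3 Γ : Struct (CForm I)} (h : QAll σ .A2 Γ) :
      CDer σ b ((Δ1.comma (Δ2.comma Δ3)).comma Γ) →
      CDer σ b (((Δ1.comma Δ2).comma Δ3).comma Γ)
  | qE {b : Bool} {Δ1 Δ2 Γ : Struct (CForm I)} (h : QAll σ .E Γ) :
      CDer σ b ((Δ2.comma Δ1).comma Γ) → CDer σ b ((Δ1.comma Δ2).comma Γ)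
  | qW {b : Bool} (R : Ctx (CForm I)) {Δ : Struct (CForm I)} (h : QAll σ .W Δ) :
      CDer σ b (R.fill .emp) → CDer σ b (R.fill Δ)
  | qC {b : Bool} (R : Ctx2 (CForm I)) {Δ : Struct (CForm I)} (h : QAll σ .C Δ) :
      CDer σ b ((R.fillFst Δ).fill Δ) → CDer σ b ((R.fillFst .emp).fill Δ)
  | cut {Γ Δ : Struct (CForm I)} {A : CForm I} :
      CDer σ true (Γ.comma (.leaf A)) → CDer σ true ((Struct.leaf A.dual).comma Δ) →
      CDer σ true (Γ.comma Δ)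

end NACLL
namespace NACLL

/-- Formulas of intuitionistic non-associative non-commutative multimodal
linear logic (acLL). -/
inductive IForm (I : Type) : Type where
  | atom : ℕ → IForm I
  | tensor : IForm I → IForm I → IForm I
  | imp : IForm I → IForm I → IForm I    -- `imp A B` is A → B
  | limp : IForm I → IForm I → IForm I   -- `limp B A` is B ← A
  | oplus : IForm I → IForm I → IForm I
  | with' : IForm I → IForm I → IForm I
  | one : IForm I
  | top : IForm I
  | bang : I → IForm I → IForm I

/-- The positive translation of acLL formulas into CacLL formulas. -/
def IForm.pos {I : Type} : IForm I → CForm I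
  | .atom a => .pos a
  | .tensor A B => .tensor A.pos B.pos
  | .imp A B => .par A.pos.dual B.pos
  | .limp B A => .par B.pos A.pos.dual
  | .oplus A B => .oplus A.pos B.pos
  | .with' A B => .with' A.pos B.pos
  | .one => .one
  | .top => .top
  | .bang i A => .bang i A.pos

/-- The negative translation of structures of acLL formulas: it reverses the
order and takes the De Morgan dual of the positive translation on leaves. -/
def negTrans {I : Type} : Struct (IForm I) → Struct (CForm I)
  | .emp => .emp
  | .leaf A => .leaf A.pos.dual
  | .pair Γ Δ => (negTrans Δ).comma (negTrans Γ)

/-- All leaves of a (nonempty) structure are `!ᵏ`-formulas whose label licenses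
the given structural axiom. -/
inductive BAll {I : Type} (σ : Sig I) (ax : SubAx) : Struct (IForm I) → Prop where
  | leaf {k : I} {F : IForm I} (h : ax ∈ σ.f k) : BAll σ ax (.leaf (.bang k F))
  | pair {Γ Δ : Struct (IForm I)} : BAll σ ax Γ → BAll σ ax Δ → BAll σ ax (.pair Γ Δ)

/-- `IUpSet σ i Γ Γ'` holds iff `Γ^{↑i}` is defined and equal to `Γ'`. -/
inductive IUpSet {I : Type} (σ : Sig I) (i : I) : Struct (IForm I) → Struct (IForm I) → Prop where
  | emp : IUpSet σ i .emp .emp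
  | keep {k : I} {F : IForm I} (h : σ.le i k) :
      IUpSet σ i (.leaf (.bang k F)) (.leaf (.bang k F))
  | drop {k : I} {F : IForm I} (h1 : ¬ σ.le i k) (h2 : SubAx.W ∈ σ.f k) :
      IUpSet σ i (.leaf (.bang k F)) .emp
  | pair {Γ Γ' Δ Δ' : Struct (IForm I)} :
      IUpSet σ i Γ Γ' → IUpSet σ i Δ Δ' → IUpSet σ i (.pair Γ Δ) (Γ'.comma Δ')

/-- Derivability in the two-sided intuitionistic sequent calculus acLL over `σ`. -/
inductive IDer {I : Type} (σ : Sig I) : Struct (IForm I) → IForm I → Prop where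
  | init (A : IForm I) : IDer σ (.leaf A) A
  | tensorL (R : Ctx (IForm I)) {A B C : IForm I} :
      IDer σ (R.fill (.pair (.leaf A) (.leaf B))) C →
      IDer σ (R.fill (.leaf (.tensor A B))) C
  | tensorR {Γ Δ : Struct (IForm I)} {A B : IForm I} :
      IDer σ Γ A → IDer σ Δ B → IDer σ (Γ.comma Δ) (.tensor A B)
  | impL (R : Ctx (IForm I)) {Δ : Struct (IForm I)} {A B C : IForm I} :
      IDer σ Δ A → IDer σ (R.fill (.leaf B)) C →
      IDer σ (R.fill (Δ.comma (.leaf (.imp A B)))) C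
  | impR {Γ : Struct (IForm I)} {A B : IForm I} :
      IDer σ ((Struct.leaf A).comma Γ) B → IDer σ Γ (.imp A B)
  | limpL (R : Ctx (IForm I)) {Δ : Struct (IForm I)} {A B C : IForm I} :
      IDer σ Δ A → IDer σ (R.fill (.leaf B)) C →
      IDer σ (R.fill ((Struct.leaf (.limp B A)).comma Δ)) C
  | limpR {Γ : Struct (IForm I)} {A B : IForm I} :
      IDer σ (Γ.comma (.leaf A)) B → IDer σ Γ (.limp B A)
  | oplusL (R : Ctx (IForm I)) {A B C : IForm I} :
      IDer σ (R.fill (.leaf A)) C → IDer σ (R.fill (.leaf B)) C →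
      IDer σ (R.fill (.leaf (.oplus A B))) C
  | oplusR₁ {Γ : Struct (IForm I)} {A B : IForm I} : IDer σ Γ A → IDer σ Γ (.oplus A B)
  | oplusR₂ {Γ : Struct (IForm I)} {A B : IForm I} : IDer σ Γ B → IDer σ Γ (.oplus A B)
  | withL₁ (R : Ctx (IForm I)) {A B C : IForm I} :
      IDer σ (R.fill (.leaf A)) C → IDer σ (R.fill (.leaf (.with' A B))) C
  | withL₂ (R : Ctx (IForm I)) {A B C : IForm I} :
      IDer σ (R.fill (.leaf B)) C → IDer σ (R.fill (.leaf (.with' A B))) C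
  | withR {Γ : Struct (IForm I)} {A B : IForm I} :
      IDer σ Γ A → IDer σ Γ B → IDer σ Γ (.with' A B)
  | oneL (R : Ctx (IForm I)) {C : IForm I} :
      IDer σ (R.fill .emp) C → IDer σ (R.fill (.leaf .one)) C
  | oneR : IDer σ .emp .one
  | topR (Γ : Struct (IForm I)) : IDer σ Γ .top
  | prom {Γ Γ' : Struct (IForm I)} {i : I} {A : IForm I} :
      IUpSet σ i Γ Γ' → IDer σ Γ' A → IDer σ Γ (.bang i A)
  | der (R : Ctx (IForm I)) {i : I} {A C : IForm I} :
      IDer σ (R.fill (.leaf A)) C → IDer σ (R.fill (.leaf (.bang i A))) C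
  | wk (R : Ctx (IForm I)) {Δ : Struct (IForm I)} {C : IForm I} (h : BAll σ .W Δ) :
      IDer σ (R.fill .emp) C → IDer σ (R.fill Δ) C
  | ctr (R : Ctx2 (IForm I)) {Δ : Struct (IForm I)} {C : IForm I} (h : BAll σ .C Δ) :
      IDer σ ((R.fillFst Δ).fill Δ) C → IDer σ ((R.fillFst .emp).fill Δ) C
  | e1 (R : Ctx (IForm I)) {Δ Θ : Struct (IForm I)} {C : IForm I} (h : BAll σ .E Δ) :
      IDer σ (R.fill (Θ.comma Δ)) C → IDer σ (R.fill (Δ.comma Θ)) C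
  | e2 (R : Ctx (IForm I)) {Δ Θ : Struct (IForm I)} {C : IForm I} (h : BAll σ .E Δ) :
      IDer σ (R.fill (Δ.comma Θ)) C → IDer σ (R.fill (Θ.comma Δ)) C
  | a1 (R : Ctx (IForm I)) {Δ1 Δ2 Δ3 : Struct (IForm I)} {C : IForm I} (h : BAll σ .A1 Δ1) :
      IDer σ (R.fill ((Δ1.comma Δ2).comma Δ3)) C →
      IDer σ (R.fill (Δ1.comma (Δ2.comma Δ3))) C
  | a2 (R : Ctx (IForm I)) {Δ1 Δ2 Δ3 : Struct (IForm I)} {C : IForm I} (h : BAll σ .A2 Δ3) :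
      IDer σ (R.fill (Δ1.comma (Δ2.comma Δ3))) C →
      IDer σ (R.fill ((Δ1.comma Δ2).comma Δ3)) C

end NACLL

namespace NACLL


theorem comma_emp' {F : Type} (Γ : Struct F) : Γ.comma .emp = Γ := by
  cases Γ <;> rfl

theorem emp_comma' {F : Type} (Γ : Struct F) : Struct.comma .emp Γ = Γ := by
  cases Γ <;> rfl

theorem negTrans_comma {I : Type} (Γ Δ : Struct (IForm I)) :
    negTrans (Γ.comma Δ) = (negTrans Δ).comma (negTrans Γ) := by
  cases Γ <;> cases Δ <;> first | rfl | exact (comma_emp' _).symm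

theorem dual_dual' {I : Type} (A : CForm I) : A.dual.dual = A := by
  induction A <;> simp_all [CForm.dual]

def nCtx {I : Type} : Ctx (IForm I) → Ctx (CForm I)
  | .hole => .hole
  | .pairL R Δ => .pairR (negTrans Δ) (nCtx R)
  | .pairR Γ R => .pairL (nCtx R) (negTrans Γ)

def nCtx2 {I : Type} : Ctx2 (IForm I) → Ctx2 (CForm I)
  | .splitLR c1 c2 => .splitRL (nCtx c2) (nCtx c1)
  | .splitRL c2 c1 => .splitLR (nCtx c1) (nCtx c2)
  | .pairL R Δ => .pairR (negTrans Δ) (nCtx2 R)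
  | .pairR Γ R => .pairL (nCtx2 R) (negTrans Γ)

theorem negTrans_fill {I : Type} (R : Ctx (IForm I)) (X : Struct (IForm I)) :
    negTrans (R.fill X) = (nCtx R).fill (negTrans X) := by
  induction R <;> simp_all [nCtx, Ctx.fill, negTrans_comma]

theorem negTrans_fill2 {I : Type} (R : Ctx2 (IForm I)) (X Y : Struct (IForm I)) :
    negTrans ((R.fillFst X).fill Y) = ((nCtx2 R).fillFst (negTrans X)).fill (negTrans Y) := by
  induction R <;> simp_all [nCtx2, Ctx.fill, Ctx2.fillFst, negTrans_comma, negTrans_fill]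

theorem QAll_neg {I : Type} {σ : Sig I} {ax : SubAx} {Γ : Struct (IForm I)}
    (h : BAll σ ax Γ) : QAll σ ax (negTrans Γ) := by
  induction h with
  | leaf h => exact QAll.leaf h
  | pair _ _ ih1 ih2 =>
    have key : ∀ {X Y : Struct (CForm I)}, QAll σ ax X → QAll σ ax Y → QAll σ ax (X.comma Y) := by
      intro X Y hX hY
      have h2 := QAll.pair hX hY
      cases hX <;> cases hY <;> exact h2
    exact key ih2 ih1

theorem UpSet_neg {I : Type} {σ : Sig I} {i : I} {Γ Γ' : Struct (IForm I)}
    (h : IUpSet σ i Γ Γ') : UpSet σ i (negTrans Γ) (negTrans Γ') := by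
  induction h with
  | emp => exact UpSet.emp
  | keep h => exact UpSet.keep h
  | drop h1 h2 => exact UpSet.drop h1 h2
  | pair _ _ ih1 ih2 =>
    have key : ∀ {X X' Y Y' : Struct (CForm I)}, UpSet σ i X X' → UpSet σ i Y Y' →
        UpSet σ i (X.comma Y) (X'.comma Y') := by
      intro X X' Y Y' hX hY
      cases X with
      | emp => cases hX; simpa [emp_comma'] using hY
      | leaf a =>
        cases Y with
        | emp => cases hY; simpa [comma_emp'] using hX
        | leaf b => exact UpSet.pair hX hY
        | pair b c => exact UpSet.pair hX hY
      | pair a a' =>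
        cases Y with
        | emp => cases hY; simpa [comma_emp'] using hX
        | leaf b => exact UpSet.pair hX hY
        | pair b c => exact UpSet.pair hX hY
    rw [negTrans_comma]
    exact key ih2 ih1

theorem exchLeaf {I : Type} {σ : Sig I} {b : Bool} {A B : CForm I}
    (h : CDer σ b (.pair (.leaf A) (.leaf B))) : CDer σ b (.pair (.leaf B) (.leaf A)) :=
  CDer.exch (Γ := .leaf B) (Δ := .leaf A) h

theorem ident {I : Type} (σ : Sig I) (A : CForm I) :
    CDer σ false (.pair (.leaf A.dual) (.leaf A)) := by
  induction A with
  | pos a => exact CDer.initN a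
  | neg a => exact CDer.initP a
  | tensor A B ihA ihB =>
    exact CDer.par (.pairL .hole (.leaf (.tensor A B)))
      (CDer.tensor (Γ := .leaf B.dual) (Δ := .leaf A.dual) ihB ihA)
  | par A B ihA ihB =>
    apply exchLeaf
    exact CDer.par (.pairL .hole (.leaf (.tensor B.dual A.dual)))
      (CDer.tensor (Γ := .leaf A) (Δ := .leaf B) (exchLeaf ihA) (exchLeaf ihB))
  | one => exact CDer.bot (.pairL .hole (.leaf .one)) CDer.one
  | bot => exact CDer.bot (.pairR (.leaf .one) .hole) CDer.one
  | oplus A B ihA ihB =>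
    exact CDer.with' (.pairL .hole (.leaf (.oplus A B)))
      (CDer.oplus₁ (.pairR (.leaf A.dual) .hole) ihA)
      (CDer.oplus₂ (.pairR (.leaf B.dual) .hole) ihB)
  | with' A B ihA ihB =>
    exact CDer.with' (.pairR (.leaf (.oplus A.dual B.dual)) .hole)
      (CDer.oplus₁ (.pairL .hole (.leaf A)) ihA)
      (CDer.oplus₂ (.pairL .hole (.leaf B)) ihB)
  | zero => exact CDer.top (.pairL .hole (.leaf .zero))
  | top => exact CDer.top (.pairR (.leaf .zero) .hole)
  | bang i A ih =>
    exact CDer.prom (Γ := .leaf (.quest i A.dual)) (UpSet.keep (σ.le_refl i))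
      (CDer.der (.pairL .hole (.leaf A)) ih)
  | quest i A ih =>
    apply exchLeaf
    exact CDer.prom (Γ := .leaf (.quest i A)) (UpSet.keep (σ.le_refl i))
      (CDer.der (.pairL .hole (.leaf A.dual)) (exchLeaf ih))

/-- Display property: the content of the hole can be displayed on the left. -/
theorem display {I : Type} (σ : Sig I) (R : Ctx (CForm I)) :
    ∀ D : Struct (CForm I), ∃ D' : Struct (CForm I), ∀ X : Struct (CForm I),
      CDer σ false ((R.fill X).comma D) ↔ CDer σ false (X.comma D') := by
  induction R with
  | hole => exact fun D => ⟨D, fun X => Iff.rfl⟩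
  | pairL R Δ ih =>
    intro D
    obtain ⟨D', h⟩ := ih (Δ.comma D)
    exact ⟨D', fun X => ⟨fun k => (h X).1 (CDer.assoc₂ k), fun k => CDer.assoc₁ ((h X).2 k)⟩⟩
  | pairR Γ R ih =>
    intro D
    obtain ⟨D', h⟩ := ih (D.comma Γ)
    exact ⟨D', fun X => ⟨fun k => (h X).1 (CDer.exch (CDer.assoc₁ (CDer.exch k))),
      fun k => CDer.exch (CDer.assoc₂ (CDer.exch ((h X).2 k)))⟩⟩

/-- **Soundness of the embedding.**  For any subexponential signature
(associativity allowed): if an acLL sequent `Γ ⊢ A` is provable in acLL, then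
`⊢ (Γ̂⊥, Â)` is provable in CacLL over the same signature. -/
theorem embedding_sound {I : Type} (σ : Sig I)
    (Γ : Struct (IForm I)) (A : IForm I) (h : IDer σ Γ A) :
    CDer σ false ((negTrans Γ).comma (.leaf A.pos)) := by
  induction h with
  | init A => exact ident σ A.pos
  | tensorL R _ ih =>
    rw [negTrans_fill] at ih ⊢
    exact CDer.par (.pairL (nCtx R) _) ih
  | tensorR _ _ ih1 ih2 =>
    rw [negTrans_comma]
    exact CDer.tensor ih2 ih1
  | @impL R Δ A B C _ _ ih1 ih2 =>
    rw [negTrans_fill] at ih2 ⊢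
    obtain ⟨D, hD⟩ := display σ (nCtx R) (.leaf C.pos)
    rw [hD] at ih2 ⊢
    rw [negTrans_comma]
    simp only [negTrans, IForm.pos, CForm.dual, dual_dual'] at ih2 ⊢
    exact CDer.assoc₁ (CDer.exch (CDer.tensor ih1 (CDer.exch ih2)))
  | @impR Γ A B _ ih =>
    rw [negTrans_comma] at ih
    exact CDer.par (.pairR (negTrans Γ) .hole)
      (CDer.assoc₂ (Δ := .leaf A.pos.dual) (Θ := .leaf B.pos) ih)
  | @limpL R Δ A B C _ _ ih1 ih2 =>
    rw [negTrans_fill] at ih2 ⊢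
    obtain ⟨D, hD⟩ := display σ (nCtx R) (.leaf C.pos)
    rw [hD] at ih2 ⊢
    rw [negTrans_comma]
    simp only [negTrans, IForm.pos, CForm.dual, dual_dual'] at ih2 ⊢
    exact CDer.exch (CDer.assoc₂ (CDer.tensor (CDer.exch ih2) ih1))
  | @limpR Γ A B _ ih =>
    rw [negTrans_comma] at ih
    exact CDer.par (.pairR (negTrans Γ) .hole)
      (CDer.assoc₂ (Δ := .leaf B.pos) (Θ := .leaf A.pos.dual) (CDer.exch (CDer.assoc₂ ih)))
  | oplusL R _ _ ih1 ih2 =>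
    rw [negTrans_fill] at ih1 ih2 ⊢
    exact CDer.with' (.pairL (nCtx R) _) ih1 ih2
  | @oplusR₁ Γ _ _ _ ih => exact CDer.oplus₁ (.pairR (negTrans Γ) .hole) ih
  | @oplusR₂ Γ _ _ _ ih => exact CDer.oplus₂ (.pairR (negTrans Γ) .hole) ih
  | withL₁ R _ ih =>
    rw [negTrans_fill] at ih ⊢
    exact CDer.oplus₁ (.pairL (nCtx R) _) ih
  | withL₂ R _ ih =>
    rw [negTrans_fill] at ih ⊢
    exact CDer.oplus₂ (.pairL (nCtx R) _) ih
  | @withR Γ _ _ _ _ ih1 ih2 => exact CDer.with' (.pairR (negTrans Γ) .hole) ih1 ih2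
  | oneL R _ ih =>
    rw [negTrans_fill] at ih ⊢
    exact CDer.bot (.pairL (nCtx R) _) ih
  | oneR => exact CDer.one
  | topR Γ => exact CDer.top (.pairR (negTrans Γ) .hole)
  | prom h _ ih => exact CDer.prom (UpSet_neg h) ih
  | der R _ ih =>
    rw [negTrans_fill] at ih ⊢
    exact CDer.der (.pairL (nCtx R) _) ih
  | wk R h _ ih =>
    rw [negTrans_fill] at ih ⊢
    exact CDer.qW (.pairL (nCtx R) _) (QAll_neg h) ih
  | ctr R h _ ih =>
    rw [negTrans_fill2] at ih ⊢
    exact CDer.qC (.pairL (nCtx2 R) _) (QAll_neg h) ih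
  | @e1 R Δ Θ C h _ ih =>
    rw [negTrans_fill] at ih ⊢
    obtain ⟨D, hD⟩ := display σ (nCtx R) (.leaf C.pos)
    rw [hD] at ih ⊢
    rw [negTrans_comma] at ih ⊢
    exact CDer.exch (CDer.assoc₂ (CDer.qE (QAll_neg h) (CDer.exch (CDer.assoc₂ ih))))
  | @e2 R Δ Θ C h _ ih =>
    rw [negTrans_fill] at ih ⊢
    obtain ⟨D, hD⟩ := display σ (nCtx R) (.leaf C.pos)
    rw [hD] at ih ⊢
    rw [negTrans_comma] at ih ⊢
    exact CDer.assoc₁ (CDer.exch (CDer.qE (QAll_neg h) (CDer.assoc₁ (CDer.exch ih))))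
  | @a1 R Δ1 Δ2 Δ3 C h _ ih =>
    rw [negTrans_fill] at ih ⊢
    obtain ⟨D, hD⟩ := display σ (nCtx R) (.leaf C.pos)
    rw [hD] at ih ⊢
    simp only [negTrans_comma] at ih ⊢
    exact CDer.exch (CDer.assoc₂ (CDer.qA1 (QAll_neg h)
      (CDer.assoc₁ (CDer.assoc₁ (CDer.exch ih)))))
  | @a2 R Δ1 Δ2 Δ3 C h _ ih =>
    rw [negTrans_fill] at ih ⊢
    obtain ⟨D, hD⟩ := display σ (nCtx R) (.leaf C.pos)
    rw [hD] at ih ⊢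
    simp only [negTrans_comma] at ih ⊢
    exact CDer.assoc₁ (CDer.exch (CDer.qA2 (QAll_neg h)
      (CDer.exch (CDer.assoc₂ (CDer.assoc₂ ih)))))

end NACLL
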